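/- (Pointwise energy identity for the Lagrangian neo-Hookean system) Let η : ℝ × ℝ³ → ℝ³ be smooth with invertible spatial Jacobian ∇η everywhere, A := (∇η)⁻¹, and ∂_j^η g := ∑_k A_{kj} ∂_k g. Let v : ℝ × ℝ³ → ℝ³, q : ℝ × ℝ³ → ℝ and 𝔽 : ℝ × ℝ³ → ℝ^{3×3} be smooth fields satisfying, at every point: (i) ∂_t v_i = ∑_j ∂_j^η ( (sym^η v)_{ij} − q δ_{ij} + ∑_m 𝔽_{im} 𝔽_{jm} ) for each i; (ii) ∂_t 𝔽_{ij} = ∑_m 𝔽_{mj} ∂_m^η v_i for all i,j; and (iii) ∑_j ∂_j^η v_j = 0, where (sym^η v)_{ij} := ∂_j^η v_i + ∂_i^η v_j and δ_{ij} is the Kronecker delta. Then at every point: ∂_t ( ½|v|² + ½|𝔽|² ) + ½ |sym^η v|² = ∑_{j} ∂_j^η ( ∑_i ( (sym^η v)_{ij} − q δ_{ij} + ∑_m 𝔽_{im} 𝔽_{jm} ) v_i ), where |v|² = ∑_i v_i², |𝔽|² = ∑_{ij} 𝔽_{ij}² and |sym^η v|² = ∑_{ij} ((sym^η v)_{ij})².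 -/

import Mathlib

open scoped Matrix BigOperators

/-- Spatial partial derivative `∂_l f` of a scalar function on `ℝ × ℝ³`. -/
noncomputable def pdx (f : ℝ × (Fin 3 → ℝ) → ℝ) (l : Fin 3) (p : ℝ × (Fin 3 → ℝ)) : ℝ :=
  fderiv ℝ (fun y => f (p.1, y)) p.2 (Pi.single l 1)

/-- Time derivative `∂_t f` of a scalar function on `ℝ × ℝ³`. -/
noncomputable def pdt (f : ℝ × (Fin 3 → ℝ) → ℝ) (p : ℝ × (Fin 3 → ℝ)) : ℝ :=
  deriv (fun s => f (s, p.2)) p.1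

/-- Spatial Jacobian matrix `∇η` with entries `(∇η)_{il} = ∂_l η_i`. -/
noncomputable def Jac (η : ℝ × (Fin 3 → ℝ) → Fin 3 → ℝ) (p : ℝ × (Fin 3 → ℝ)) :
    Matrix (Fin 3) (Fin 3) ℝ :=
  Matrix.of fun i l => pdx (fun q => η q i) l p

/-- Transformed derivative `∂_j^η g = ∑_k A_{kj} ∂_k g`, where `A = (∇η)⁻¹`. -/
noncomputable def Deta (η : ℝ × (Fin 3 → ℝ) → Fin 3 → ℝ) (f : ℝ × (Fin 3 → ℝ) → ℝ)
    (j : Fin 3) (p : ℝ × (Fin 3 → ℝ)) : ℝ :=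
  ∑ k, (Jac η p)⁻¹ k j * pdx f k p

/-- Transformed doubled symmetric gradient `(sym^η v)_{ij} = ∂_j^η v_i + ∂_i^η v_j`. -/
noncomputable def symv (η v : ℝ × (Fin 3 → ℝ) → Fin 3 → ℝ) (i j : Fin 3)
    (p : ℝ × (Fin 3 → ℝ)) : ℝ :=
  Deta η (fun q => v q i) j p + Deta η (fun q => v q j) i p

/-- Stress tensor `(sym^η v)_{ij} − q δ_{ij} + ∑_m 𝔽_{im} 𝔽_{jm}`. -/
noncomputable def stress (η v : ℝ × (Fin 3 → ℝ) → Fin 3 → ℝ)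
    (pr : ℝ × (Fin 3 → ℝ) → ℝ) (F : ℝ × (Fin 3 → ℝ) → Fin 3 → Fin 3 → ℝ)
    (i j : Fin 3) (p : ℝ × (Fin 3 → ℝ)) : ℝ :=
  symv η v i j p - (if i = j then pr p else 0) + ∑ m, F p i m * F p j m

/-!
Each `∂_j^η` is, at a fixed point, the directional derivative along the `j`-th column of `A`, hence
a derivation. The divergence of `stress · v` therefore splits into `(div^η stress) · v`, which the
momentum equation turns into `∂_t ½|v|²`, and the stress power `stress : ∇^η v`. In the latter the
symmetric gradient contributes `½|sym^η v|²`, the pressure drops out by incompressibility, and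
`𝔽𝔽ᵀ : ∇^η v = 𝔽 : (∇^η v) 𝔽` is `∂_t ½|𝔽|²` by the evolution of `𝔽`.
-/

section General

theorem sum_sum_add_swap_mul {ι K : Type*} [Fintype ι] [Field K] [NeZero (2 : K)]
    (D : ι → ι → K) :
    ∑ i, ∑ j, (D i j + D j i) * D i j = (∑ i, ∑ j, (D i j + D j i) ^ 2) / 2 := by
  have swap : ∑ i, ∑ j, (D i j + D j i) * D j i = ∑ i, ∑ j, (D i j + D j i) * D i j := by
    rw [Finset.sum_comm]
    simp only [add_comm]
  have split : ∑ i, ∑ j, (D i j + D j i) ^ 2 =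
      ∑ i, ∑ j, (D i j + D j i) * D i j + ∑ i, ∑ j, (D i j + D j i) * D j i := by
    simp only [← Finset.sum_add_distrib, ← mul_add, sq]
  rw [split, swap, add_self_div_two]

theorem sum_sum_gram_mul {ι κ R : Type*} [Fintype ι] [Fintype κ] [CommSemiring R]
    (F : ι → κ → R) (D : ι → ι → R) :
    ∑ i, ∑ j, (∑ m, F i m * F j m) * D i j = ∑ i, ∑ m, F i m * ∑ j, F j m * D i j := by
  refine Finset.sum_congr rfl fun i _ => ?_
  simp only [Finset.sum_mul, Finset.mul_sum, mul_assoc]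
  exact Finset.sum_comm

theorem hasDerivAt_half_sum_sq {ι 𝕜 : Type*} [Fintype ι] [NontriviallyNormedField 𝕜]
    [NeZero (2 : 𝕜)] {g : ι → 𝕜 → 𝕜} {g' : ι → 𝕜} {t : 𝕜} (hg : ∀ i, HasDerivAt (g i) (g' i) t) :
    HasDerivAt (fun s => (∑ i, g i s ^ 2) / 2) (∑ i, g i t * g' i) t := by
  have hsum := (HasDerivAt.fun_sum (u := Finset.univ) fun i _ => (hg i).fun_pow 2).div_const 2
  refine hsum.congr_deriv ?_
  rw [Finset.sum_div]
  exact Finset.sum_congr rfl fun i _ => by field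

open scoped Matrix.Norms.Operator in
theorem differentiableAt_matrix_inv_apply {𝕜 E n : Type*} [NontriviallyNormedField 𝕜]
    [CompleteSpace 𝕜] [NormedAddCommGroup E] [NormedSpace 𝕜 E] [Fintype n] [DecidableEq n]
    {M : E → Matrix n n 𝕜} {x : E}
    (hM : ∀ i j, DifferentiableAt 𝕜 (fun y => M y i j) x) (hx : IsUnit (M x)) (i j : n) :
    DifferentiableAt 𝕜 (fun y => (M y)⁻¹ i j) x := by
  -- The uniformity of the operator norm is not syntactically `Matrix.instUniformSpace`.
  have : @CompleteSpace (Matrix n n 𝕜) PseudoMetricSpace.toUniformSpace :=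
    FiniteDimensional.complete 𝕜 _
  have hM' : DifferentiableAt 𝕜 M x :=
    differentiableAt_pi.2 fun i => differentiableAt_pi.2 fun j => hM i j
  have hinv : DifferentiableAt 𝕜 (fun y => (M y)⁻¹) x := by
    simp only [Matrix.nonsing_inv_eq_ringInverse]
    exact hM'.inverse hx
  exact differentiableAt_pi.1 (differentiableAt_pi.1 hinv i) j

end General

section TransformedDerivative

variable {η v : ℝ × (Fin 3 → ℝ) → Fin 3 → ℝ} {f g : ℝ × (Fin 3 → ℝ) → ℝ} {p : ℝ × (Fin 3 → ℝ)}

theorem differentiableAt_pdx (hf : ContDiffAt ℝ 2 (fun y => f (p.1, y)) p.2) (l : Fin 3) :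
    DifferentiableAt ℝ (fun y => pdx f l (p.1, y)) p.2 :=
  ((hf.fderiv_right (m := 1) le_rfl).differentiableAt one_ne_zero).clm_apply
    (differentiableAt_const _)

theorem differentiableAt_Deta (hη : ContDiffAt ℝ 2 (fun y => η (p.1, y)) p.2)
    (hinv : IsUnit (Jac η p)) (hf : ContDiffAt ℝ 2 (fun y => f (p.1, y)) p.2) (j : Fin 3) :
    DifferentiableAt ℝ (fun y => Deta η f j (p.1, y)) p.2 := by
  have hJac : ∀ i l, DifferentiableAt ℝ (fun y => Jac η (p.1, y) i l) p.2 := fun i l =>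
    differentiableAt_pdx (f := fun q => η q i) (contDiffAt_pi.1 hη i) l
  exact DifferentiableAt.fun_sum fun k _ =>
    (differentiableAt_matrix_inv_apply hJac hinv k j).mul (differentiableAt_pdx hf k)

theorem differentiableAt_stress {pr : ℝ × (Fin 3 → ℝ) → ℝ}
    {F : ℝ × (Fin 3 → ℝ) → Fin 3 → Fin 3 → ℝ}
    (hη : ContDiffAt ℝ 2 (fun y => η (p.1, y)) p.2) (hinv : IsUnit (Jac η p))
    (hv : ContDiffAt ℝ 2 (fun y => v (p.1, y)) p.2)
    (hpr : DifferentiableAt ℝ (fun y => pr (p.1, y)) p.2)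
    (hF : DifferentiableAt ℝ (fun y => F (p.1, y)) p.2) (i j : Fin 3) :
    DifferentiableAt ℝ (fun y => stress η v pr F i j (p.1, y)) p.2 := by
  have hDeta : ∀ i j, DifferentiableAt ℝ (fun y => Deta η (fun q => v q i) j (p.1, y)) p.2 :=
    fun i => differentiableAt_Deta hη hinv (contDiffAt_pi.1 hv i)
  have hpressure : DifferentiableAt ℝ (fun y => if i = j then pr (p.1, y) else 0) p.2 := by
    split_ifs
    · exact hpr
    · exact differentiableAt_const 0
  have hF' : ∀ i m, DifferentiableAt ℝ (fun y => F (p.1, y) i m) p.2 := fun i m =>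
    differentiableAt_pi.1 (differentiableAt_pi.1 hF i) m
  exact (((hDeta i j).add (hDeta j i)).sub hpressure).add
    (DifferentiableAt.fun_sum fun m _ => (hF' i m).mul (hF' j m))

theorem Deta_eq_fderiv (η : ℝ × (Fin 3 → ℝ) → Fin 3 → ℝ) (f : ℝ × (Fin 3 → ℝ) → ℝ) (j : Fin 3)
    (p : ℝ × (Fin 3 → ℝ)) :
    Deta η f j p = fderiv ℝ (fun y => f (p.1, y)) p.2 (fun k => (Jac η p)⁻¹ k j) := by
  conv_rhs => rw [pi_eq_sum_univ' (fun k => (Jac η p)⁻¹ k j)]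
  simp only [Deta, pdx, map_sum, map_smul, smul_eq_mul]

theorem Deta_fun_sum {ι : Type*} [Fintype ι] {f : ι → ℝ × (Fin 3 → ℝ) → ℝ}
    (hf : ∀ i, DifferentiableAt ℝ (fun y => f i (p.1, y)) p.2) (j : Fin 3) :
    Deta η (fun q => ∑ i, f i q) j p = ∑ i, Deta η (f i) j p := by
  simp only [Deta_eq_fderiv]
  rw [fderiv_fun_sum fun i _ => hf i, sum_apply]

theorem Deta_fun_mul (hf : DifferentiableAt ℝ (fun y => f (p.1, y)) p.2)
    (hg : DifferentiableAt ℝ (fun y => g (p.1, y)) p.2) (j : Fin 3) :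
    Deta η (fun q => f q * g q) j p = Deta η f j p * g p + f p * Deta η g j p := by
  simp only [Deta_eq_fderiv]
  rw [fderiv_fun_mul hf hg]
  simp only [add_apply, smul_apply, smul_eq_mul]
  ring

theorem sum_Deta_sum_mul {ι : Type*} [Fintype ι] {S : ι → Fin 3 → ℝ × (Fin 3 → ℝ) → ℝ}
    {w : ι → ℝ × (Fin 3 → ℝ) → ℝ}
    (hS : ∀ i j, DifferentiableAt ℝ (fun y => S i j (p.1, y)) p.2)
    (hw : ∀ i, DifferentiableAt ℝ (fun y => w i (p.1, y)) p.2) :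
    ∑ j, Deta η (fun q => ∑ i, S i j q * w i q) j p =
      ∑ i, w i p * ∑ j, Deta η (S i j) j p + ∑ i, ∑ j, S i j p * Deta η (w i) j p := by
  have product_rule : ∀ j, Deta η (fun q => ∑ i, S i j q * w i q) j p =
      ∑ i, (w i p * Deta η (S i j) j p + S i j p * Deta η (w i) j p) := fun j => by
    rw [Deta_fun_sum fun i => (hS i j).mul (hw i)]
    exact Finset.sum_congr rfl fun i _ => by rw [Deta_fun_mul (hS i j) (hw i), mul_comm (w i p)]
  simp only [product_rule, Finset.mul_sum]
  rw [Finset.sum_comm]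
  simp only [Finset.sum_add_distrib]

end TransformedDerivative

section Energy

variable {η v : ℝ × (Fin 3 → ℝ) → Fin 3 → ℝ} {pr : ℝ × (Fin 3 → ℝ) → ℝ}
  {F : ℝ × (Fin 3 → ℝ) → Fin 3 → Fin 3 → ℝ} {p : ℝ × (Fin 3 → ℝ)}

theorem pdt_energy (hv : DifferentiableAt ℝ (fun s => v (s, p.2)) p.1)
    (hF : DifferentiableAt ℝ (fun s => F (s, p.2)) p.1) :
    pdt (fun q => (∑ i, (v q i) ^ 2) / 2 + (∑ i, ∑ j, (F q i j) ^ 2) / 2) p =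
      ∑ i, v p i * pdt (fun q => v q i) p + ∑ i, ∑ j, F p i j * pdt (fun q => F q i j) p := by
  have kinetic := hasDerivAt_half_sum_sq fun i => (differentiableAt_pi.1 hv i).hasDerivAt
  have elastic := hasDerivAt_half_sum_sq fun ij : Fin 3 × Fin 3 =>
    (differentiableAt_pi.1 (differentiableAt_pi.1 hF ij.1) ij.2).hasDerivAt
  simp only [Fintype.sum_prod_type] at elastic
  exact (kinetic.add elastic).deriv

theorem sum_stress_mul_Deta (hdiv : ∑ j, Deta η (fun q => v q j) j p = 0) :
    ∑ i, ∑ j, stress η v pr F i j p * Deta η (fun q => v q i) j p =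
      (∑ i, ∑ j, (symv η v i j p) ^ 2) / 2 +
        ∑ i, ∑ j, F p i j * ∑ m, F p m j * Deta η (fun q => v q i) m p := by
  have pressure_power :
      ∑ i, ∑ j, (if i = j then pr p else 0) * Deta η (fun q => v q i) j p = 0 := by
    simp only [ite_mul, zero_mul, Finset.sum_ite_eq, Finset.mem_univ, if_true, ← Finset.mul_sum,
      hdiv, mul_zero]
  have viscous_power :
      ∑ i, ∑ j, symv η v i j p * Deta η (fun q => v q i) j p =
        (∑ i, ∑ j, (symv η v i j p) ^ 2) / 2 :=
    sum_sum_add_swap_mul fun i j => Deta η (fun q => v q i) j p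
  simp only [stress, add_mul, sub_mul, Finset.sum_add_distrib, Finset.sum_sub_distrib]
  rw [pressure_power, viscous_power, sum_sum_gram_mul, sub_zero]

end Energy

theorem pointwise_energy_identity_general
    {η v : ℝ × (Fin 3 → ℝ) → Fin 3 → ℝ} {pr : ℝ × (Fin 3 → ℝ) → ℝ}
    {F : ℝ × (Fin 3 → ℝ) → Fin 3 → Fin 3 → ℝ} {p : ℝ × (Fin 3 → ℝ)}
    (hη : ContDiffAt ℝ 2 η p) (hinv : IsUnit (Jac η p)) (hv : ContDiffAt ℝ 2 v p)
    (hpr : DifferentiableAt ℝ pr p) (hF : DifferentiableAt ℝ F p)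
    (hmom : ∀ i, pdt (fun q => v q i) p = ∑ j, Deta η (stress η v pr F i j) j p)
    (hdef : ∀ i j, pdt (fun q => F q i j) p = ∑ m, F p m j * Deta η (fun q => v q i) m p)
    (hdiv : ∑ j, Deta η (fun q => v q j) j p = 0) :
    pdt (fun q => (∑ i, (v q i) ^ 2) / 2 + (∑ i, ∑ j, (F q i j) ^ 2) / 2) p
        + (∑ i, ∑ j, (symv η v i j p) ^ 2) / 2
      = ∑ j, Deta η (fun q => ∑ i, stress η v pr F i j q * v q i) j p := by
  have hηx : ContDiffAt ℝ 2 (fun y => η (p.1, y)) p.2 := hη.comp p.2 (by fun_prop)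
  have hvx : ContDiffAt ℝ 2 (fun y => v (p.1, y)) p.2 := hv.comp p.2 (by fun_prop)
  have hprx : DifferentiableAt ℝ (fun y => pr (p.1, y)) p.2 := hpr.comp p.2 (by fun_prop)
  have hFx : DifferentiableAt ℝ (fun y => F (p.1, y)) p.2 := hF.comp p.2 (by fun_prop)
  have hvt : DifferentiableAt ℝ (fun s => v (s, p.2)) p.1 :=
    (hv.differentiableAt two_ne_zero).comp p.1 (by fun_prop)
  have hFt : DifferentiableAt ℝ (fun s => F (s, p.2)) p.1 := hF.comp p.1 (by fun_prop)
  calc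
    _ = ∑ i, v p i * ∑ j, Deta η (stress η v pr F i j) j p
          + ∑ i, ∑ j, F p i j * ∑ m, F p m j * Deta η (fun q => v q i) m p
          + (∑ i, ∑ j, (symv η v i j p) ^ 2) / 2 := by
      simp only [pdt_energy hvt hFt, hmom, hdef]
    _ = ∑ i, v p i * ∑ j, Deta η (stress η v pr F i j) j p
          + ∑ i, ∑ j, stress η v pr F i j p * Deta η (fun q => v q i) j p := by
      rw [sum_stress_mul_Deta hdiv]
      ring
    _ = _ := (sum_Deta_sum_mul (w := fun i q => v q i)
      (differentiableAt_stress hηx hinv hvx hprx hFx)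
      (differentiableAt_pi.1 (hvx.differentiableAt two_ne_zero))).symm

/-- Pointwise energy identity for the Lagrangian neo-Hookean system:
`∂_t(½|v|² + ½|𝔽|²) + ½|sym^η v|² = ∑_j ∂_j^η (∑_i stress_{ij} v_i)`. -/
theorem pointwise_energy_identity
    (η v : ℝ × (Fin 3 → ℝ) → Fin 3 → ℝ)
    (pr : ℝ × (Fin 3 → ℝ) → ℝ) (F : ℝ × (Fin 3 → ℝ) → Fin 3 → Fin 3 → ℝ)
    (hη : ContDiff ℝ (⊤ : ℕ∞) η) (hinv : ∀ p, IsUnit (Jac η p))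
    (hv : ContDiff ℝ (⊤ : ℕ∞) v) (hpr : ContDiff ℝ (⊤ : ℕ∞) pr) (hF : ContDiff ℝ (⊤ : ℕ∞) F)
    (hmom : ∀ (p : ℝ × (Fin 3 → ℝ)) (i : Fin 3),
      pdt (fun q => v q i) p = ∑ j, Deta η (stress η v pr F i j) j p)
    (hdef : ∀ (p : ℝ × (Fin 3 → ℝ)) (i j : Fin 3),
      pdt (fun q => F q i j) p = ∑ m, F p m j * Deta η (fun q => v q i) m p)
    (hdiv : ∀ p : ℝ × (Fin 3 → ℝ), ∑ j, Deta η (fun q => v q j) j p = 0)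
    (p : ℝ × (Fin 3 → ℝ)) :
    pdt (fun q => (∑ i, (v q i) ^ 2) / 2 + (∑ i, ∑ j, (F q i j) ^ 2) / 2) p
        + (∑ i, ∑ j, (symv η v i j p) ^ 2) / 2
      = ∑ j, Deta η (fun q => ∑ i, stress η v pr F i j q * v q i) j p := by
  exact pointwise_energy_identity_general (hη.contDiffAt.of_le ENat.LEInfty.out) (hinv p)
    (hv.contDiffAt.of_le ENat.LEInfty.out) (hpr.contDiffAt.differentiableAt (by simp))
    (hF.contDiffAt.differentiableAt (by simp)) (hmom p) (hdef p) (hdiv p)
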